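/- In the same setting (d ≥ 3, Σ positive definite with unit diagonal and smallest eigenvalue σ_*², φ > 0, ε ∈ (0,1], v ≥ 1, K > 0, η = K/√(log d)), sup over rectangles A and w ∈ ℝ^d of Σ_{j_1,…,j_v=1}^d sup_{‖y‖_∞ ≤ ε σ_* η} |∂_{j_1…j_v} ρ^{A,φ,ε,Σ}(w + y)| ≤ C (log d)^{v/2} / (ε σ_*)^v, where C depends only on v and K. -/

import Mathlib

open MeasureTheory ProbabilityTheory

/-- The piecewise-linear smoothing function g^φ. -/
noncomputable def gphi (φ t : ℝ) : ℝ :=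
  if t ≤ 0 then 1 else if t < 1 / φ then 1 - φ * t else 0

/-- The φ-Lipschitz smoothed indicator of the rectangle ∏ (a_j, b_j]. -/
noncomputable def mrect (d : ℕ) (a b : Fin d → ℝ) (φ : ℝ) (w : Fin d → ℝ) : ℝ :=
  gphi φ (⨆ j, max (w j - b j) (a j - w j))

/-- ρ^{A,φ,ε,Σ}(w) = E[m^{A,φ}(w + εZ)], Z ∼ N(0,Σ) with law γ. -/
noncomputable def rhoFn (d : ℕ) (a b : Fin d → ℝ) (φ ε : ℝ)
    (γ : Measure (Fin d → ℝ)) (w : Fin d → ℝ) : ℝ :=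
  ∫ z, mrect d a b φ (w + ε • z) ∂γ


open WithLp in
lemma gauss_charFun {d : ℕ} (S : Fin d → Fin d → ℝ) (γ : Measure (Fin d → ℝ)) [IsProbabilityMeasure γ]
    (hl : ∀ l : (Fin d → ℝ) →ₗ[ℝ] ℝ, ∃ vr : NNReal, γ.map l = gaussianReal 0 vr)
    (hS : ∀ j k, ∫ z, z j * z k ∂γ = S j k) (t : EuclideanSpace ℝ (Fin d)) :
    charFun (γ.map (toLp 2)) t = Complex.exp (-((∑ j, ∑ k, t j * S j k * t k : ℝ) : ℂ) / 2) := by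
  have hG : IsGaussian γ := by
    apply isGaussian_of_map_eq_gaussianReal
    intro L
    obtain ⟨vr, h⟩ := hl L.toLinearMap
    exact ⟨0, vr, h⟩
  let L : (Fin d → ℝ) →L[ℝ] ℝ := ∑ j, t j • ContinuousLinearMap.proj (R := ℝ) (φ := fun _ => ℝ) j
  have hL : ∀ z, L z = ∑ j, t j * z j := by intro z; simp [L]
  obtain ⟨vr, h⟩ := hl L.toLinearMap
  have h' : γ.map L = gaussianReal 0 vr := h
  have hm : MemLp L 2 γ := IsGaussian.memLp_dual γ L 2 (by simp)
  have hint : ∀ j k, Integrable (fun z : Fin d → ℝ => z j * z k) γ := by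
    intro j k
    exact MemLp.integrable_mul (p := 2) (q := 2)
      (IsGaussian.memLp_dual γ (ContinuousLinearMap.proj (R := ℝ) (φ := fun _ => ℝ) j) 2 (by simp))
      (IsGaussian.memLp_dual γ (ContinuousLinearMap.proj (R := ℝ) (φ := fun _ => ℝ) k) 2 (by simp))
  have h0 : ∫ z, L z ∂γ = 0 := by
    have := integral_id_gaussianReal (μ := 0) (v := vr)
    rw [← h', integral_map (by fun_prop) (by fun_prop)] at this
    exact this
  have hv : (vr : ℝ) = ∑ j, ∑ k, t j * S j k * t k := by
    have := variance_id_gaussianReal (μ := 0) (v := vr)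
    rw [← h', variance_map (by fun_prop) (by fun_prop)] at this
    rw [← this]
    rw [Function.id_comp, variance_of_integral_eq_zero (by fun_prop) h0]
    simp only [hL, sq, Finset.sum_mul_sum]
    rw [integral_finsetSum]
    · refine Finset.sum_congr rfl fun j _ => ?_
      rw [integral_finsetSum]
      · refine Finset.sum_congr rfl fun k _ => ?_
        rw [← hS j k, ← integral_const_mul, ← integral_mul_const]
        congr 1; ext z; ring
      · intro k _
        exact ((hint j k).const_mul (t j * t k)).congr (.of_forall fun z => by
          show t j * t k * (z j * z k) = t j * z j * (t k * z k)
          ring)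
    · intro j _
      refine integrable_finsetSum _ fun k _ => ?_
      exact ((hint j k).const_mul (t j * t k)).congr (.of_forall fun z => by
          show t j * t k * (z j * z k) = t j * z j * (t k * z k)
          ring)
  have h1 : charFun (γ.map (toLp 2)) t = charFun (γ.map L) 1 := by
    rw [charFun_apply, charFun_apply_real, integral_map (by fun_prop) (by fun_prop), integral_map (by fun_prop) (by fun_prop)]
    congr 1; ext z
    rw [hL, PiLp.inner_apply]
    simp [mul_comm]
  rw [h1, h', charFun_gaussianReal, ← hv]
  congr 1
  push_cast; ring

open WithLp in
lemma gauss_decomp {d : ℕ} (S : Fin d → Fin d → ℝ) (γ : Measure (Fin d → ℝ)) [IsProbabilityMeasure γ]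
    (hl : ∀ l : (Fin d → ℝ) →ₗ[ℝ] ℝ, ∃ vr : NNReal, γ.map l = gaussianReal 0 vr)
    (hS : ∀ j k, ∫ z, z j * z k ∂γ = S j k) (σ : ℝ)
    (hσ : σ ^ 2 ∈ lowerBounds {r : ℝ | ∃ x : Fin d → ℝ, (∑ j, (x j) ^ 2) = 1 ∧
        r = ∑ j, ∑ k, x j * S j k * x k}) :
    ∃ γ' : Measure (Fin d → ℝ), IsProbabilityMeasure γ' ∧
      γ = ((Measure.pi (fun _ : Fin d => gaussianReal 0 1)).prod γ').map (fun p => σ • p.1 + p.2) := by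
  have hsym : ∀ j k, S j k = S k j := by
    intro j k; rw [← hS, ← hS]; simp [mul_comm]
  have hq : ∀ x : Fin d → ℝ, σ ^ 2 * ∑ j, x j ^ 2 ≤ ∑ j, ∑ k, x j * S j k * x k := by
    intro x
    by_cases hx : ∑ j, x j ^ 2 = 0
    · have : ∀ j, x j = 0 := by
        intro j
        have := (Finset.sum_eq_zero_iff_of_nonneg (fun j _ => sq_nonneg (x j))).1 hx j (Finset.mem_univ _)
        simpa using this
      simp [this]
    have hp : 0 < ∑ j, x j ^ 2 := lt_of_le_of_ne (Finset.sum_nonneg fun j _ => sq_nonneg _) (Ne.symm hx)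
    set c := ∑ j, x j ^ 2
    have := hσ ⟨fun j => x j / √c, ?_, rfl⟩
    · have e : ∑ j, ∑ k, x j / √c * S j k * (x k / √c) = (∑ j, ∑ k, x j * S j k * x k) / c := by
        rw [Finset.sum_div]
        refine Finset.sum_congr rfl fun j _ => ?_
        rw [Finset.sum_div]
        refine Finset.sum_congr rfl fun k _ => ?_
        rw [div_mul_eq_mul_div, div_mul_div_comm, Real.mul_self_sqrt hp.le]
      rw [e, le_div_iff₀ hp] at this
      exact this
    · simp only [div_pow, Real.sq_sqrt hp.le]
      rw [← Finset.sum_div]; exact div_self hx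
  let T : Matrix (Fin d) (Fin d) ℝ := Matrix.of S - σ ^ 2 • (1 : Matrix (Fin d) (Fin d) ℝ)
  have hTq : ∀ x : Fin d → ℝ, x ⬝ᵥ (T.mulVec x) = (∑ j, ∑ k, x j * S j k * x k) - σ ^ 2 * ∑ j, x j ^ 2 := by
    intro x
    simp only [T, Matrix.sub_mulVec, dotProduct_sub, Matrix.smul_mulVec, Matrix.one_mulVec, dotProduct_smul]
    simp only [dotProduct, Matrix.mulVec, Finset.mul_sum, smul_eq_mul, Matrix.of_apply]
    congr 1
    · refine Finset.sum_congr rfl fun j _ => Finset.sum_congr rfl fun k _ => by ring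
    · refine Finset.sum_congr rfl fun j _ => by ring
  have hT : T.PosSemidef := by
    refine Matrix.PosSemidef.of_dotProduct_mulVec_nonneg ?_ ?_
    · ext j k
      simp [T, Matrix.sub_apply, Matrix.one_apply, hsym j k, eq_comm]
    · intro x
      have := hTq x
      simp only [star_trivial]
      rw [this]
      linarith [hq x]
  let ν := Measure.pi (fun _ : Fin d => gaussianReal 0 1)
  let M := multivariateGaussian (0 : EuclideanSpace ℝ (Fin d)) T
  have hofLp : Measurable (ofLp : EuclideanSpace ℝ (Fin d) → (Fin d → ℝ)) := by fun_prop
  refine ⟨M.map ofLp, Measure.isProbabilityMeasure_map (by fun_prop), ?_⟩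
  have key : γ.map (toLp 2) = ((ν.map (toLp 2)).map (fun x => σ • x)) ∗ M := by
    have : IsProbabilityMeasure (γ.map (toLp 2)) := Measure.isProbabilityMeasure_map (by fun_prop)
    have : IsProbabilityMeasure (ν.map (toLp 2)) := Measure.isProbabilityMeasure_map (by fun_prop)
    have : IsProbabilityMeasure ((ν.map (toLp 2)).map (fun x => σ • x)) := Measure.isProbabilityMeasure_map (by fun_prop)
    apply Measure.ext_of_charFun
    ext t
    rw [gauss_charFun S γ hl hS, charFun_conv, charFun_map_smul, map_pi_eq_stdGaussian, charFun_stdGaussian,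
      charFun_multivariateGaussian hT, ← Complex.exp_add]
    congr 1
    rw [hTq, norm_smul, ← Complex.ofReal_pow, mul_pow, EuclideanSpace.real_norm_sq_eq]
    simp
    ring
  have h2 : γ = (γ.map (toLp 2)).map ofLp := by
    rw [Measure.map_map (by fun_prop) (by fun_prop)]
    simp [Function.comp_def]
  rw [h2, key, Measure.conv, Measure.map_map (by fun_prop) (by fun_prop), Measure.map_map (by fun_prop) (by fun_prop)]
  have e : (ν.map ((fun x : EuclideanSpace ℝ (Fin d) => σ • x) ∘ toLp 2)).prod M = (ν.prod (M.map ofLp)).map (Prod.map ((fun x : EuclideanSpace ℝ (Fin d) => σ • x) ∘ toLp 2) (toLp 2)) := by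
    rw [← Measure.map_prod_map _ _ (by fun_prop) (by fun_prop), Measure.map_map (f := ofLp) (by fun_prop) (by fun_prop)]
    simp [Function.comp_def]
  rw [e, Measure.map_map (by fun_prop) (by fun_prop)]
  rfl


/-- Hermite-type polynomials: derivatives of the normal density. -/
noncomputable def hpoly : ℕ → Polynomial ℝ
  | 0 => Polynomial.C (√(2 * Real.pi))⁻¹
  | k + 1 => Polynomial.derivative (hpoly k) - Polynomial.X * hpoly k

/-- Derivatives of the standard normal distribution function. -/
noncomputable def Psi : ℕ → ℝ → ℝ
  | 0 => fun t => cdf (gaussianReal 0 1) t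
  | k + 1 => fun t => (hpoly k).eval t * Real.exp (-t ^ 2 / 2)

lemma Psi_one (t : ℝ) : Psi 1 t = gaussianPDFReal 0 1 t := by
  simp [Psi, hpoly, gaussianPDFReal]

lemma Psi_sub (a b : ℝ) : Psi 0 b - Psi 0 a = ∫ t in a..b, gaussianPDFReal 0 1 t := by
  have h : ∀ x, Psi 0 x = ∫ t in Set.Iic x, gaussianPDFReal 0 1 t := by
    intro x
    simp only [Psi]
    rw [cdf_eq_real, Measure.real, gaussianReal_apply_eq_integral 0 (by simp), ENNReal.toReal_ofReal]
    exact setIntegral_nonneg measurableSet_Iic (fun t _ => gaussianPDFReal_nonneg _ _ _)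
  rw [h, h, intervalIntegral.integral_Iic_sub_Iic] <;> exact (integrable_gaussianPDFReal 0 1).integrableOn

lemma Psi_hasDerivAt (k : ℕ) (t : ℝ) : HasDerivAt (Psi k) (Psi (k + 1) t) t := by
  cases k with
  | zero =>
    have hc : Continuous (gaussianPDFReal 0 1) := by
      unfold gaussianPDFReal; fun_prop
    have h := intervalIntegral.integral_hasDerivAt_right (f := gaussianPDFReal 0 1) (a := 0) (b := t)
      (hc.intervalIntegrable _ _) (hc.stronglyMeasurableAtFilter _ _) hc.continuousAt
    have h2 := h.const_add (Psi 0 0)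
    rw [zero_add, Psi_one]
    have e : Psi 0 = fun x => Psi 0 0 + ∫ t in (0:ℝ)..x, gaussianPDFReal 0 1 t := by
      ext x
      rw [← Psi_sub]; ring
    rw [e]
    exact h2
  | succ k =>
    have h1 := (hpoly k).hasDerivAt t
    have h2 : HasDerivAt (fun t : ℝ => Real.exp (-t ^ 2 / 2)) (Real.exp (-t ^ 2 / 2) * (-t)) t := by
      have : HasDerivAt (fun t : ℝ => -t ^ 2 / 2) (-t) t := by
        have h := (hasDerivAt_pow 2 t).fun_neg.div_const 2
        have e : -(((2 : ℕ) : ℝ) * t ^ (2 - 1)) / 2 = -t := by norm_num; ring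
        rw [e] at h
        exact h
      exact this.exp
    have h3 := h1.mul h2
    have e : Psi (k + 1 + 1) t = Polynomial.eval t (Polynomial.derivative (hpoly k)) * Real.exp (-t ^ 2 / 2) + Polynomial.eval t (hpoly k) * (Real.exp (-t ^ 2 / 2) * -t) := by
      simp only [Psi, hpoly, Polynomial.eval_sub, Polynomial.eval_mul, Polynomial.eval_X]
      ring
    rw [e]
    exact h3

lemma Psi_zero_nonneg (t : ℝ) : 0 ≤ Psi 0 t := cdf_nonneg _ _
lemma Psi_zero_le_one (t : ℝ) : Psi 0 t ≤ 1 := cdf_le_one _ _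
lemma Psi_zero_mono {s t : ℝ} (h : s ≤ t) : Psi 0 s ≤ Psi 0 t := monotone_cdf _ h

lemma Psi_continuous (k : ℕ) : Continuous (Psi k) :=
  continuous_iff_continuousAt.2 fun t => (Psi_hasDerivAt k t).continuousAt

lemma poly_bound (p : Polynomial ℝ) (n : ℕ) (hn : p.natDegree ≤ n) :
    ∃ C, 0 ≤ C ∧ ∀ t : ℝ, |p.eval t| ≤ C * (1 + |t|) ^ n := by
  refine ⟨∑ i ∈ Finset.range (n + 1), |p.coeff i|, Finset.sum_nonneg fun _ _ => abs_nonneg _, fun t => ?_⟩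
  rw [Polynomial.eval_eq_sum_range' (Nat.lt_succ_of_le hn), Finset.sum_mul]
  refine (Finset.abs_sum_le_sum_abs _ _).trans (Finset.sum_le_sum fun i hi => ?_)
  rw [abs_mul, abs_pow]
  gcongr
  have hi' : i ≤ n := by simpa [Nat.lt_succ_iff] using hi
  calc |t| ^ i ≤ (1 + |t|) ^ i := by gcongr; linarith
    _ ≤ (1 + |t|) ^ n := pow_le_pow_right₀ (by linarith [abs_nonneg t]) hi'

lemma hpoly_deg (k : ℕ) : (hpoly k).natDegree ≤ k := by
  induction k with
  | zero => exact (Polynomial.natDegree_C _).le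
  | succ k ih =>
    refine (Polynomial.natDegree_sub_le _ _).trans (max_le ?_ ?_)
    · have := Polynomial.natDegree_derivative_le (hpoly k); omega
    · refine Polynomial.natDegree_mul_le.trans ?_
      simp; omega

lemma Psi_succ_bound (k : ℕ) : ∃ C, 0 ≤ C ∧ ∀ t, |Psi (k + 1) t| ≤ C * (1 + |t|) ^ k * Real.exp (-t ^ 2 / 2) := by
  obtain ⟨C, h0, h⟩ := poly_bound (hpoly k) k (hpoly_deg k)
  refine ⟨C, h0, fun t => ?_⟩
  simp only [Psi]
  rw [abs_mul, Real.abs_exp]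
  gcongr
  exact h t

lemma pow_exp_bound (k : ℕ) (x : ℝ) (hx : 0 ≤ x) :
    (1 + x) ^ k * Real.exp (-x ^ 2 / 2) ≤ k.factorial * Real.exp 2 * Real.exp (-x ^ 2 / 4) := by
  have h := Real.pow_div_factorial_le_exp (1 + x) (by linarith) k
  rw [div_le_iff₀ (by positivity)] at h
  calc (1 + x) ^ k * Real.exp (-x ^ 2 / 2) ≤ (Real.exp (1 + x) * k.factorial) * Real.exp (-x ^ 2 / 2) := by gcongr
    _ = k.factorial * Real.exp (1 + x + (-x ^ 2 / 2)) := by rw [Real.exp_add _ (-x ^ 2 / 2)]; ring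
    _ ≤ k.factorial * Real.exp (2 + -x ^ 2 / 4) := by
        gcongr ?_ * Real.exp ?_
        nlinarith [sq_nonneg (x - 2)]
    _ = _ := by rw [Real.exp_add]; ring

lemma Psi_bound (k : ℕ) : ∃ C, 0 ≤ C ∧ ∀ t, |Psi k t| ≤ C := by
  cases k with
  | zero => exact ⟨1, by norm_num, fun t => by rw [abs_of_nonneg (Psi_zero_nonneg t)]; exact Psi_zero_le_one t⟩
  | succ k =>
    obtain ⟨C, h0, h⟩ := Psi_succ_bound k
    refine ⟨C * (k.factorial * Real.exp 2), by positivity, fun t => (h t).trans ?_⟩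
    have := pow_exp_bound k |t| (abs_nonneg t)
    rw [sq_abs] at this
    rw [mul_assoc]
    refine mul_le_mul_of_nonneg_left ?_ h0
    refine this.trans (mul_le_of_le_one_right (by positivity) ?_)
    rw [Real.exp_le_one_iff]
    nlinarith [sq_nonneg t]

lemma key_core (K : ℝ) (hK : 0 < K) (k : ℕ) : ∃ C, 0 ≤ C ∧ ∀ l : ℝ, 1 ≤ l → ∀ t t' p : ℝ,
    |t - t'| ≤ 2 * (K / l) →
    (∃ ξ, |ξ - t'| ≤ 1 / l ∧ (√(2 * Real.pi))⁻¹ * Real.exp (-ξ ^ 2 / 2) / l ≤ p) →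
    |Psi (k + 1) t| ≤ C * l ^ (k + 1) * (p + Real.exp (-l ^ 2)) := by
  obtain ⟨C, h0, h⟩ := Psi_succ_bound k
  set D := (4 * (2 * K + 1) + (2 * K + 1) ^ 2) / 2
  set c := √(2 * Real.pi)
  have hc : 0 < c := Real.sqrt_pos.2 (by positivity)
  refine ⟨C * (k.factorial * Real.exp 2) + C * 3 ^ k * (c * Real.exp D), by positivity, ?_⟩
  rintro l hl t t' p htt ⟨ξ, hξ, hp⟩
  have hl0 : 0 < l := by linarith
  have hp0 : 0 ≤ p := le_trans (by positivity) hp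
  have hlk : 1 ≤ l ^ (k + 1) := one_le_pow₀ hl
  refine (h t).trans ?_
  by_cases ht : 2 * l ≤ |t|
  · have := pow_exp_bound k |t| (abs_nonneg t)
    rw [sq_abs] at this
    have e : Real.exp (-t ^ 2 / 4) ≤ Real.exp (-l ^ 2) := by
      rw [Real.exp_le_exp]
      have : (2 * l) ^ 2 ≤ t ^ 2 := by rw [← sq_abs t]; gcongr
      nlinarith
    calc C * (1 + |t|) ^ k * Real.exp (-t ^ 2 / 2) = C * ((1 + |t|) ^ k * Real.exp (-t ^ 2 / 2)) := by ring
      _ ≤ C * (k.factorial * Real.exp 2 * Real.exp (-l ^ 2)) := by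
        refine mul_le_mul_of_nonneg_left ?_ h0
        exact this.trans (by gcongr)
      _ = C * (k.factorial * Real.exp 2) * 1 * (0 + Real.exp (-l ^ 2)) := by ring
      _ ≤ _ := by
        gcongr
        have : 0 ≤ C * 3 ^ k * (c * Real.exp D) := by positivity
        linarith
  · push Not at ht
    have hpw : (1 + |t|) ^ k ≤ (3 * l) ^ k := by gcongr; linarith
    have hξt : |ξ - t| ≤ (2 * K + 1) / l := by
      have : |ξ - t| ≤ |ξ - t'| + |t - t'| := by
        have := abs_sub_le ξ t' t
        rw [abs_sub_comm t' t] at this; exact this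
      have e : (2 * K + 1) / l = 1 / l + 2 * (K / l) := by ring
      linarith
    have hd : (2 * K + 1) / l ≤ 2 * K + 1 := div_le_self (by positivity) hl
    have h1 : |ξ + t| ≤ 4 * l + (2 * K + 1) := by
      have : |ξ + t| ≤ |ξ - t| + 2 * |t| := by
        calc |ξ + t| = |(ξ - t) + 2 * t| := by ring_nf
          _ ≤ _ := by refine (abs_add_le _ _).trans ?_; rw [abs_mul]; norm_num
      linarith
    have h2 : ξ ^ 2 - t ^ 2 ≤ 2 * D := by
      calc ξ ^ 2 - t ^ 2 = (ξ - t) * (ξ + t) := by ring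
        _ ≤ |ξ - t| * |ξ + t| := by rw [← abs_mul]; exact le_abs_self _
        _ ≤ (2 * K + 1) / l * (4 * l + (2 * K + 1)) := by gcongr
        _ = 4 * (2 * K + 1) + (2 * K + 1) / l * (2 * K + 1) := by field_simp
        _ ≤ 4 * (2 * K + 1) + (2 * K + 1) * (2 * K + 1) := by gcongr
        _ = 2 * D := by simp only [D]; ring
    have h3 : Real.exp (-t ^ 2 / 2) ≤ (c * Real.exp D) * l * p := by
      have : Real.exp (-t ^ 2 / 2) ≤ Real.exp D * Real.exp (-ξ ^ 2 / 2) := by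
        rw [← Real.exp_add, Real.exp_le_exp]; linarith
      refine this.trans ?_
      have : Real.exp (-ξ ^ 2 / 2) = c * l * (c⁻¹ * Real.exp (-ξ ^ 2 / 2) / l) := by field_simp
      rw [this]
      calc Real.exp D * (c * l * (c⁻¹ * Real.exp (-ξ ^ 2 / 2) / l)) ≤ Real.exp D * (c * l * p) := by gcongr
        _ = _ := by ring
    calc C * (1 + |t|) ^ k * Real.exp (-t ^ 2 / 2) ≤ C * (3 * l) ^ k * ((c * Real.exp D) * l * p) := by gcongr
      _ = (C * 3 ^ k * (c * Real.exp D)) * l ^ (k + 1) * (p + 0) := by rw [mul_pow]; ring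
      _ ≤ _ := by
        gcongr
        · have : 0 ≤ C * (k.factorial * Real.exp 2) := by positivity
          linarith
        · positivity

lemma key_up (K : ℝ) (hK : 0 < K) (k : ℕ) : ∃ C, 0 ≤ C ∧ ∀ l : ℝ, 1 ≤ l → ∀ t t' : ℝ,
    |t - t'| ≤ 2 * (K / l) →
    |Psi (k + 1) t| ≤ C * l ^ (k + 1) * ((1 - Psi 0 t') + Real.exp (-l ^ 2)) ∧
    |Psi (k + 1) t| ≤ C * l ^ (k + 1) * (Psi 0 t' + Real.exp (-l ^ 2)) := by
  obtain ⟨C, h0, h⟩ := key_core K hK k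
  refine ⟨C, h0, fun l hl t t' htt => ?_⟩
  have hl0 : 0 < 1 / l := by positivity
  have mv : ∀ a b : ℝ, a < b → b - a = 1 / l → ∃ ξ, a < ξ ∧ ξ < b ∧ (√(2 * Real.pi))⁻¹ * Real.exp (-ξ ^ 2 / 2) / l = Psi 0 b - Psi 0 a := by
    intro a b hab hl'
    obtain ⟨ξ, ⟨h1, h2⟩, h3⟩ := exists_hasDerivAt_eq_slope (Psi 0) (Psi 1) hab (Psi_continuous 0).continuousOn
      (fun x _ => Psi_hasDerivAt 0 x)
    refine ⟨ξ, h1, h2, ?_⟩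
    rw [hl', div_div_eq_mul_div, div_one, ] at h3
    have : Psi 1 ξ = (√(2 * Real.pi))⁻¹ * Real.exp (-ξ ^ 2 / 2) := by simp [Psi, hpoly]
    rw [← this, h3]; field_simp
  constructor
  · obtain ⟨ξ, h1, h2, h3⟩ := mv t' (t' + 1 / l) (by linarith) (by ring)
    refine h l hl t t' _ htt ⟨ξ, by rw [abs_le]; constructor <;> linarith, ?_⟩
    have := Psi_zero_le_one (t' + 1 / l)
    linarith
  · obtain ⟨ξ, h1, h2, h3⟩ := mv (t' - 1 / l) t' (by linarith) (by ring)
    refine h l hl t t' _ htt ⟨ξ, by rw [abs_le]; constructor <;> linarith, ?_⟩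
    have := Psi_zero_nonneg (t' - 1 / l)
    linarith


lemma fam_contDiff {d : ℕ} (R : (Fin d → ℕ) → (Fin d → ℝ) → ℝ)
    (h : ∀ k x, HasFDerivAt (R k) (∑ j, R (k + Pi.single j 1) x •
      (ContinuousLinearMap.proj (R := ℝ) (φ := fun _ => ℝ) j : (Fin d → ℝ) →L[ℝ] ℝ)) x) (n : ℕ) :
    ∀ k, ContDiff ℝ n (R k) := by
  induction n with
  | zero =>
    intro k
    exact contDiff_zero.2 (continuous_iff_continuousAt.2 fun x => (h k x).continuousAt)
  | succ n ih =>
    intro k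
    push_cast
    rw [contDiff_succ_iff_hasFDerivAt]
    refine ⟨_, ?_, h k⟩
    refine ContDiff.sum fun j _ => ?_
    exact (ih _).smul contDiff_const

lemma fam_iterated {d : ℕ} (R : (Fin d → ℕ) → (Fin d → ℝ) → ℝ)
    (h : ∀ k x, HasFDerivAt (R k) (∑ j, R (k + Pi.single j 1) x •
      (ContinuousLinearMap.proj (R := ℝ) (φ := fun _ => ℝ) j : (Fin d → ℝ) →L[ℝ] ℝ)) x) (n : ℕ) :
    ∀ (k : Fin d → ℕ) (x : Fin d → ℝ) (J : Fin n → Fin d),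
      iteratedFDeriv ℝ n (R k) x (fun i => Pi.single (J i) 1) = R (k + ∑ i, Pi.single (J i) 1) x := by
  induction n with
  | zero => intro k x J; simp
  | succ n ih =>
    intro k x J
    have hd : DifferentiableAt ℝ (iteratedFDeriv ℝ n (R k)) x := by
      have := (fam_contDiff R h (n + 1) k)
      exact (this.differentiable_iteratedFDeriv (by exact_mod_cast Nat.lt_succ_self n)) x
    rw [hd.iteratedFDeriv_succ_apply_left']
    have e : (fun y => (iteratedFDeriv ℝ n (R k) y) (Fin.tail (α := fun _ => Fin d → ℝ) fun i => Pi.single (J i) (1:ℝ)))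
        = R (k + ∑ i : Fin n, Pi.single (J i.succ) 1) := by
      ext y
      exact ih k y (fun i => J i.succ)
    rw [e, (h _ x).fderiv]
    simp only [sum_apply, smul_apply, ContinuousLinearMap.proj_apply, smul_eq_mul]
    rw [Finset.sum_eq_single (J 0)]
    · rw [Pi.single_eq_same, mul_one, Fin.sum_univ_succ, add_assoc, add_comm (∑ i : Fin n, _)]
    · intro j _ hj; simp [hj]
    · simp

lemma sum_image {d : ℕ} (x : Fin d → ℝ) (hx : ∀ j, 0 ≤ x j) (n : ℕ) :
    ∑ J : Fin n → Fin d, ∏ j ∈ Finset.univ.image J, x j ≤ (n + ∑ j, x j) ^ n := by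
  have hX : 0 ≤ ∑ j, x j := Finset.sum_nonneg fun j _ => hx j
  induction n with
  | zero => simp
  | succ n ih =>
    rw [← (Fin.consEquiv (fun _ : Fin (n + 1) => Fin d)).sum_comp, Fintype.sum_prod_type_right]
    have step : ∀ J : Fin n → Fin d, ∑ j0, ∏ j ∈ Finset.univ.image (Fin.consEquiv (fun _ : Fin (n + 1) => Fin d) (j0, J)), x j
        ≤ (∏ j ∈ Finset.univ.image J, x j) * (n + ∑ j, x j) := by
      intro J
      set I := Finset.univ.image J
      have hP : 0 ≤ ∏ j ∈ I, x j := Finset.prod_nonneg fun j _ => hx j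
      have hI : ∀ j0, Finset.univ.image (Fin.consEquiv (fun _ : Fin (n + 1) => Fin d) (j0, J)) = insert j0 I := by
        intro j0
        ext j
        simp [I, Fin.exists_fin_succ, Fin.consEquiv, eq_comm]
      have h1 : ∀ j0, ∏ j ∈ insert j0 I, x j ≤ (∏ j ∈ I, x j) * ((if j0 ∈ I then 1 else 0) + x j0) := by
        intro j0
        by_cases h : j0 ∈ I
        · rw [Finset.insert_eq_of_mem h, if_pos h]
          nlinarith [hx j0]
        · rw [Finset.prod_insert h, if_neg h]; linarith
      calc _ ≤ ∑ j0, (∏ j ∈ I, x j) * ((if j0 ∈ I then 1 else 0) + x j0) := by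
            refine Finset.sum_le_sum fun j0 _ => ?_
            rw [hI]; exact h1 j0
        _ = (∏ j ∈ I, x j) * (I.card + ∑ j, x j) := by
            rw [← Finset.mul_sum, Finset.sum_add_distrib]
            simp
        _ ≤ _ := by
            gcongr
            exact_mod_cast (Finset.card_image_le).trans (by simp)
    calc _ ≤ ∑ J : Fin n → Fin d, (∏ j ∈ Finset.univ.image J, x j) * (n + ∑ j, x j) :=
          Finset.sum_le_sum fun J _ => step J
      _ = (∑ J : Fin n → Fin d, ∏ j ∈ Finset.univ.image J, x j) * (n + ∑ j, x j) := by rw [Finset.sum_mul]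
      _ ≤ (n + ∑ j, x j) ^ n * (n + ∑ j, x j) := by gcongr
      _ = (n + ∑ j, x j) ^ (n + 1) := by ring
      _ ≤ _ := by gcongr; simp

/-- Pointwise majorant of the `m`-th derivative of one factor. -/
noncomputable def Gm (δ A r : ℝ) (m : ℕ) : ℝ := if m = 0 then 1 - r else A ^ m * (r + 2 * δ)

lemma comb {d n : ℕ} (δ A : ℝ) (hδ : 0 ≤ δ) (hdδ : d * δ = 1) (hA : 0 ≤ A) (r : Fin d → ℝ)
    (h0 : ∀ j, 0 ≤ r j) (h1 : ∀ j, r j ≤ 1) :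
    ∑ J : Fin n → Fin d, ∏ j, Gm δ A (r j) ((∑ i, Pi.single (J i) 1 : Fin d → ℕ) j)
      ≤ A ^ n * (Real.exp n * (n.factorial * Real.exp (n + 2))) := by
  have hb : ∀ J : Fin n → Fin d, ∏ j, Gm δ A (r j) ((∑ i, Pi.single (J i) 1 : Fin d → ℕ) j)
      ≤ (A ^ n * Real.exp n * Real.exp (-∑ j, r j)) * ∏ j ∈ Finset.univ.image J, (r j + 2 * δ) := by
    intro J
    set k : Fin d → ℕ := ∑ i, Pi.single (J i) 1 with hk
    have hsum : ∑ j, k j = n := by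
      simp only [hk, Finset.sum_apply]
      rw [Finset.sum_comm]
      simp
    have hmem : ∀ j, j ∈ Finset.univ.image J ↔ k j ≠ 0 := by
      intro j
      simp only [hk, Finset.sum_apply, Finset.mem_image, Finset.mem_univ, true_and, ne_eq,
        Finset.sum_eq_zero_iff, Pi.single_apply]
      simp [eq_comm]
    have e1 : ∏ j, (A ^ k j * Real.exp (k j) * Real.exp (-r j) * (if j ∈ Finset.univ.image J then r j + 2 * δ else 1))
        = (A ^ n * Real.exp n * Real.exp (-∑ j, r j)) * ∏ j ∈ Finset.univ.image J, (r j + 2 * δ) := by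
      simp only [Finset.prod_mul_distrib]
      rw [Finset.prod_pow_eq_pow_sum, hsum, ← Real.exp_sum, ← Real.exp_sum, ← Nat.cast_sum, hsum, Finset.sum_neg_distrib,
        Finset.prod_ite_mem, Finset.univ_inter]
    rw [← e1]
    refine Finset.prod_le_prod (fun j _ => ?_) (fun j _ => ?_)
    · unfold Gm
      split_ifs
      · linarith [h1 j]
      · have := h0 j; positivity
    · unfold Gm
      by_cases hkj : k j = 0
      · rw [if_pos hkj, if_neg (by rw [hmem]; simpa using hkj), hkj]
        simp
        have := Real.add_one_le_exp (-r j)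
        linarith
      · rw [if_neg hkj, if_pos ((hmem j).2 hkj)]
        have hx : 0 ≤ r j + 2 * δ := by have := h0 j; positivity
        refine mul_le_mul_of_nonneg_right ?_ hx
        rw [mul_assoc, ← Real.exp_add]
        refine le_mul_of_one_le_right (by positivity) (Real.one_le_exp ?_)
        have : (1 : ℝ) ≤ k j := by exact_mod_cast Nat.one_le_iff_ne_zero.2 hkj
        linarith [h1 j]
  set X := ∑ j, r j
  have hX : 0 ≤ X := Finset.sum_nonneg fun j _ => h0 j
  have hxs : ∑ j, (r j + 2 * δ) = X + 2 := by
    rw [Finset.sum_add_distrib]; simp; linarith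
  calc _ ≤ ∑ J : Fin n → Fin d, (A ^ n * Real.exp n * Real.exp (-X)) * ∏ j ∈ Finset.univ.image J, (r j + 2 * δ) :=
        Finset.sum_le_sum fun J _ => hb J
    _ = (A ^ n * Real.exp n * Real.exp (-X)) * ∑ J : Fin n → Fin d, ∏ j ∈ Finset.univ.image J, (r j + 2 * δ) := by
        rw [Finset.mul_sum]
    _ ≤ (A ^ n * Real.exp n * Real.exp (-X)) * (n + (X + 2)) ^ n := by
        have := sum_image (fun j => r j + 2 * δ) (fun j => by have := h0 j; positivity) n
        rw [hxs] at this
        gcongr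
    _ ≤ (A ^ n * Real.exp n * Real.exp (-X)) * (n.factorial * Real.exp (n + (X + 2))) := by
        have := Real.pow_div_factorial_le_exp (n + (X + 2)) (by positivity) n
        rw [div_le_iff₀ (by positivity)] at this
        gcongr
        linarith
    _ = _ := by
        have : Real.exp (n + (X + 2)) = Real.exp X * Real.exp (n + 2) := by rw [← Real.exp_add]; congr 1; ring
        rw [this, Real.exp_neg]
        field_simp


/-- One factor of the differentiated product. -/
noncomputable def ff (s : ℝ) (m : ℕ) (α β x : ℝ) : ℝ :=
  (-1 / s) ^ m * (Psi m (β - x / s) - Psi m (α - x / s))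

lemma ff_hasDerivAt (s : ℝ) (m : ℕ) (α β x : ℝ) :
    HasDerivAt (ff s m α β) (ff s (m + 1) α β x) x := by
  have h : ∀ c, HasDerivAt (fun x => Psi m (c - x / s)) (Psi (m + 1) (c - x / s) * (-1 / s)) x := by
    intro c
    have h1 : HasDerivAt (fun x : ℝ => c - x / s) (-1 / s) x := by
      have := ((hasDerivAt_id x).div_const s).const_sub c
      rw [neg_div]
      exact this
    exact (Psi_hasDerivAt m (c - x / s)).comp x h1
  have h2 := ((h β).fun_sub (h α)).const_mul ((-1 / s) ^ m)
  have e : ff s (m + 1) α β x = (-1 / s) ^ m * (Psi (m + 1) (β - x / s) * (-1 / s) - Psi (m + 1) (α - x / s) * (-1 / s)) := by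
    unfold ff; ring
  rw [e]; exact h2

lemma ff_bound (s : ℝ) (m : ℕ) : ∃ C, 0 ≤ C ∧ ∀ α β x, |ff s m α β x| ≤ C := by
  obtain ⟨C, h0, h⟩ := Psi_bound m
  refine ⟨|(-1 / s) ^ m| * (C + C), by positivity, fun α β x => ?_⟩
  unfold ff
  rw [abs_mul]
  gcongr
  exact (abs_sub _ _).trans (add_le_add (h _) (h _))

lemma ff_measurable {Ω : Type*} [MeasurableSpace Ω] (s : ℝ) (m : ℕ) (α β : Ω → ℝ) (hα : Measurable α) (hβ : Measurable β) (x : ℝ) :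
    Measurable fun ω => ff s m (α ω) (β ω) x := by
  have := (Psi_continuous m).measurable
  unfold ff
  fun_prop

/-- The differentiated integral. -/
noncomputable def Rint {Ω : Type*} [MeasurableSpace Ω] {d : ℕ} (π : Measure Ω) (s : ℝ) (α β : Ω → Fin d → ℝ)
    (k : Fin d → ℕ) (w : Fin d → ℝ) : ℝ :=
  ∫ ω, ∏ j, ff s (k j) (α ω j) (β ω j) (w j) ∂π

lemma prod_ff_bound (s : ℝ) {d : ℕ} (k : Fin d → ℕ) : ∃ C, 0 ≤ C ∧ ∀ α β w : Fin d → ℝ,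
    |∏ j, ff s (k j) (α j) (β j) (w j)| ≤ C := by
  choose C h0 h using ff_bound s
  refine ⟨∏ j, C (k j), Finset.prod_nonneg fun j _ => h0 _, fun α β w => ?_⟩
  rw [Finset.abs_prod]
  exact Finset.prod_le_prod (fun _ _ => abs_nonneg _) fun j _ => h _ _ _ _

lemma Rint_hasFDerivAt {Ω : Type*} [MeasurableSpace Ω] {d : ℕ} (π : Measure Ω) [IsFiniteMeasure π] (s : ℝ)
    (α β : Ω → Fin d → ℝ) (hα : Measurable α) (hβ : Measurable β) (k : Fin d → ℕ) (x : Fin d → ℝ) :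
    HasFDerivAt (Rint π s α β k) (∑ j, Rint π s α β (k + Pi.single j 1) x •
      (ContinuousLinearMap.proj (R := ℝ) (φ := fun _ => ℝ) j : (Fin d → ℝ) →L[ℝ] ℝ)) x := by
  have hmeas : ∀ (k : Fin d → ℕ) (x : Fin d → ℝ), Measurable fun ω => ∏ j, ff s (k j) (α ω j) (β ω j) (x j) := by
    intro k x
    refine Finset.measurable_prod _ fun j _ => ?_
    exact ff_measurable s (k j) (fun ω => α ω j) (fun ω => β ω j) (by fun_prop) (by fun_prop) (x j)
  choose C h0 hC using fun k => prod_ff_bound s (d := d) k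
  have hint : ∀ (k : Fin d → ℕ) (x : Fin d → ℝ), Integrable (fun ω => ∏ j, ff s (k j) (α ω j) (β ω j) (x j)) π := fun k x =>
    Integrable.of_bound (hmeas k x).aestronglyMeasurable (C k) (.of_forall fun ω => hC k _ _ _)
  let P : Fin d → ((Fin d → ℝ) →L[ℝ] ℝ) := fun j => ContinuousLinearMap.proj (R := ℝ) (φ := fun _ => ℝ) j
  let F' : (Fin d → ℝ) → Ω → ((Fin d → ℝ) →L[ℝ] ℝ) := fun x ω =>
    ∑ j, (∏ i, ff s ((k + Pi.single j 1 : Fin d → ℕ) i) (α ω i) (β ω i) (x i)) • P j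
  have main := hasFDerivAt_integral_of_dominated_of_fderiv_le (𝕜 := ℝ) (μ := π) (s := Set.univ) (x₀ := x)
    (F := fun x ω => ∏ j, ff s (k j) (α ω j) (β ω j) (x j)) (F' := F')
    (bound := fun _ => ∑ j, C (k + Pi.single j 1) * ‖P j‖) Filter.univ_mem
    (.of_forall fun x => (hmeas k x).aestronglyMeasurable) (hint k x) ?_ ?_ (integrable_const _) ?_
  · have e : ∫ ω, F' x ω ∂π = ∑ j, Rint π s α β (k + Pi.single j 1) x • P j := by
      simp only [F']
      rw [integral_finsetSum]
      · refine Finset.sum_congr rfl fun j _ => ?_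
        rw [integral_smul_const]; rfl
      · intro j _
        exact (hint (k + Pi.single j 1) x).smul_const (P j)
    rw [e] at main
    exact main
  · have hI : Integrable (fun ω => ∑ j, (∏ i, ff s ((k + Pi.single j 1 : Fin d → ℕ) i) (α ω i) (β ω i) (x i)) • P j) π :=
      integrable_finsetSum Finset.univ fun j _ => (hint (k + Pi.single j 1) x).smul_const (P j)
    exact hI.aestronglyMeasurable
  · refine .of_forall fun ω x _ => ?_
    refine (norm_sum_le _ _).trans (Finset.sum_le_sum fun j _ => ?_)
    rw [norm_smul]
    gcongr
    exact hC _ _ _ _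
  · refine .of_forall fun ω x _ => ?_
    have hj : ∀ j ∈ (Finset.univ : Finset (Fin d)), HasFDerivAt (fun x : Fin d → ℝ => ff s (k j) (α ω j) (β ω j) (x j))
        (ff s (k j + 1) (α ω j) (β ω j) (x j) • P j) x := by
      intro j _
      have h1 := (P j).hasFDerivAt (x := x)
      have h2 : HasDerivAt (ff s (k j) (α ω j) (β ω j)) (ff s (k j + 1) (α ω j) (β ω j) (x j)) (P j x) :=
        ff_hasDerivAt s (k j) (α ω j) (β ω j) (x j)
      have h3 := HasDerivAt.comp_hasFDerivAt (h₂ := ff s (k j) (α ω j) (β ω j)) x h2 h1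
      exact h3
    have := HasFDerivAt.finsetProd hj
    refine this.congr_fderiv ?_
    symm
    simp only [F']
    refine Finset.sum_congr rfl fun j _ => ?_
    rw [smul_smul]
    congr 1
    rw [← Finset.prod_erase_mul _ _ (Finset.mem_univ j)]
    congr 1
    · refine Finset.prod_congr rfl fun i hi => ?_
      simp [Finset.ne_of_mem_erase hi]
    · simp

/-- Lower bound for the probability of leaving the interval. -/
noncomputable def rr (s η α β w : ℝ) : ℝ := 1 - Psi 0 (β - w / s + η) + Psi 0 (α - w / s - η)

lemma ff_majorant (K : ℝ) (hK : 0 < K) (n : ℕ) : ∃ C, 1 ≤ C ∧ ∀ l : ℝ, 1 ≤ l → ∀ s, 0 < s →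
    ∀ α β w y : ℝ, α ≤ β → |y| ≤ s * (K / l) → ∀ m ≤ n,
    |ff s m α β (w + y)| ≤ Gm (Real.exp (-l ^ 2)) (C * l / s) (rr s (K / l) α β w) m := by
  choose C h0 hC using key_up K hK
  refine ⟨1 + ∑ i ∈ Finset.range n, C i, by simpa using Finset.sum_nonneg fun i _ => h0 i, ?_⟩
  intro l hl s hs α β w y hαβ hy m hm
  have hl0 : 0 < l := by linarith
  have hys : |y / s| ≤ K / l := by
    rw [abs_div, abs_of_pos hs, div_le_iff₀ hs]; linarith
  have hys' := abs_le.1 hys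
  have hb : β - (w + y) / s = β - w / s - y / s := by ring
  have ha : α - (w + y) / s = α - w / s - y / s := by ring
  unfold ff Gm rr
  rw [hb, ha]
  cases m with
  | zero =>
    rw [if_pos rfl, pow_zero, one_mul]
    have h1 : Psi 0 (α - w / s - y / s) ≤ Psi 0 (β - w / s - y / s) := Psi_zero_mono (by linarith)
    have h2 : Psi 0 (β - w / s - y / s) ≤ Psi 0 (β - w / s + K / l) := Psi_zero_mono (by linarith)
    have h3 : Psi 0 (α - w / s - K / l) ≤ Psi 0 (α - w / s - y / s) := Psi_zero_mono (by linarith)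
    rw [abs_of_nonneg (by linarith)]
    linarith
  | succ k =>
    rw [if_neg (by omega)]
    set D := 1 + ∑ i ∈ Finset.range n, C i
    have hD1 : 1 ≤ D := by simpa [D] using Finset.sum_nonneg fun i _ => h0 i
    have hCD : C k ≤ D := by
      have := Finset.single_le_sum (f := C) (fun i _ => h0 i) (Finset.mem_range.2 (show k < n by omega))
      simp only [D]; linarith
    have hCD' : C k ≤ D ^ (k + 1) := hCD.trans (le_self_pow₀ hD1 (by omega))
    have h1 := (hC k l hl (β - w / s - y / s) (β - w / s + K / l) (by rw [abs_le]; constructor <;> linarith)).1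
    have h2 := (hC k l hl (α - w / s - y / s) (α - w / s - K / l) (by rw [abs_le]; constructor <;> linarith)).2
    set p := Psi 0 (β - w / s + K / l)
    set q := Psi 0 (α - w / s - K / l)
    have hp : 0 ≤ 1 - p := by linarith [Psi_zero_le_one (β - w / s + K / l)]
    have hq : 0 ≤ q := Psi_zero_nonneg _
    rw [abs_mul, abs_pow, neg_div, abs_neg, abs_of_pos (by positivity : 0 < 1 / s)]
    calc (1 / s) ^ (k + 1) * |Psi (k + 1) (β - w / s - y / s) - Psi (k + 1) (α - w / s - y / s)|
        ≤ (1 / s) ^ (k + 1) * (C k * l ^ (k + 1) * (1 - p + Real.exp (-l ^ 2)) + C k * l ^ (k + 1) * (q + Real.exp (-l ^ 2))) := by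
          gcongr
          exact (abs_sub _ _).trans (add_le_add h1 h2)
      _ = (1 / s) ^ (k + 1) * (C k * l ^ (k + 1)) * (1 - p + q + 2 * Real.exp (-l ^ 2)) := by ring
      _ ≤ (1 / s) ^ (k + 1) * (D ^ (k + 1) * l ^ (k + 1)) * (1 - p + q + 2 * Real.exp (-l ^ 2)) := by
          gcongr
      _ = _ := by rw [← mul_pow, ← mul_pow]; congr 2; ring

lemma rr_nonneg (s η α β w : ℝ) : 0 ≤ rr s η α β w := by
  unfold rr; linarith [Psi_zero_le_one (β - w / s + η), Psi_zero_nonneg (α - w / s - η)]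

lemma rr_le_one (s η α β w : ℝ) (hη : 0 ≤ η) (h : α ≤ β) : rr s η α β w ≤ 1 := by
  unfold rr
  have : Psi 0 (α - w / s - η) ≤ Psi 0 (β - w / s + η) := Psi_zero_mono (by linarith)
  linarith

lemma main_bound (n : ℕ) (K : ℝ) (hK : 0 < K) : ∃ C, 0 ≤ C ∧ ∀ {Ω : Type} [MeasurableSpace Ω] {d : ℕ} (hd : 3 ≤ d) (π : Measure Ω)
    (hπ : π Set.univ ≤ 1) (s : ℝ) (hs : 0 < s)
    (α β : Ω → Fin d → ℝ) (hα : Measurable α) (hβ : Measurable β) (hαβ : ∀ ω j, α ω j ≤ β ω j) (w : Fin d → ℝ),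
    ∑ J : Fin n → Fin d,
          (⨆ y : {y : Fin d → ℝ // ‖y‖ ≤ s * (K / Real.sqrt (Real.log d))},
            |iteratedFDeriv ℝ n (Rint π s α β 0) (w + y.1)
              (fun i => Pi.single (J i) 1)|)
          ≤ C * Real.log d ^ ((n : ℝ) / 2) / s ^ n := by
  obtain ⟨C, hC1, hC⟩ := ff_majorant K hK n
  refine ⟨C ^ n * (Real.exp n * (n.factorial * Real.exp (n + 2))), by positivity, ?_⟩
  intro Ω _ d hd π hπ s hs α β hα hβ hαβ w
  have : IsFiniteMeasure π := ⟨lt_of_le_of_lt hπ ENNReal.one_lt_top⟩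
  have hd0 : (0 : ℝ) < d := by exact_mod_cast (by omega : 0 < d)
  have hL : 1 ≤ Real.log d := by
    rw [Real.le_log_iff_exp_le hd0]
    have h3 : (3 : ℝ) ≤ d := by exact_mod_cast hd
    linarith [Real.exp_one_lt_d9]
  set l := Real.sqrt (Real.log d)
  have hl : 1 ≤ l := Real.one_le_sqrt.2 hL
  have hl2 : l ^ 2 = Real.log d := Real.sq_sqrt (by linarith)
  have hln : Real.log d ^ ((n : ℝ) / 2) = l ^ n := by
    rw [← hl2, ← Real.rpow_natCast l 2, ← Real.rpow_mul (by linarith), ← Real.rpow_natCast l n]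
    congr 1; push_cast; ring
  set δ := Real.exp (-l ^ 2)
  have hδ : d * δ = 1 := by
    simp only [δ]; rw [hl2, Real.exp_neg, Real.exp_log hd0]; field_simp
  have hδ0 : 0 ≤ δ := (Real.exp_pos _).le
  set A := C * l / s
  have hA : 0 ≤ A := by positivity
  have hη : 0 ≤ K / l := by positivity
  let H : (Fin n → Fin d) → Ω → ℝ := fun J ω => ∏ j, Gm δ A (rr s (K / l) (α ω j) (β ω j) (w j)) ((∑ i, Pi.single (J i) 1 : Fin d → ℕ) j)
  have hG0 : ∀ ω j m, 0 ≤ Gm δ A (rr s (K / l) (α ω j) (β ω j) (w j)) m := by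
    intro ω j m
    have h1 := rr_nonneg s (K / l) (α ω j) (β ω j) (w j)
    have h2 := rr_le_one s (K / l) (α ω j) (β ω j) (w j) hη (hαβ ω j)
    unfold Gm
    split_ifs
    · linarith
    · positivity
  have hH0 : ∀ J ω, 0 ≤ H J ω := fun J ω => Finset.prod_nonneg fun j _ => hG0 ω j _
  have hHs : ∀ ω, ∑ J, H J ω ≤ A ^ n * (Real.exp n * (n.factorial * Real.exp (n + 2))) := fun ω =>
    comb δ A hδ0 hδ hA _ (fun j => rr_nonneg _ _ _ _ _) (fun j => rr_le_one _ _ _ _ _ hη (hαβ ω j))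
  have hHm : ∀ J, Measurable (H J) := by
    intro J
    refine Finset.measurable_prod _ fun j _ => ?_
    have := (Psi_continuous 0).measurable
    unfold Gm rr
    split_ifs <;> fun_prop
  have hHi : ∀ J, Integrable (H J) π := fun J =>
    Integrable.of_bound (hHm J).aestronglyMeasurable (A ^ n * (Real.exp n * (n.factorial * Real.exp (n + 2)))) (.of_forall fun ω => by
      rw [Real.norm_of_nonneg (hH0 J ω)]
      exact (Finset.single_le_sum (f := fun J => H J ω) (fun J _ => hH0 J ω) (Finset.mem_univ J)).trans (hHs ω))
  have hJ : ∀ J : Fin n → Fin d, (⨆ y : {y : Fin d → ℝ // ‖y‖ ≤ s * (K / l)},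
            |iteratedFDeriv ℝ n (Rint π s α β 0) (w + y.1)
              (fun i => Pi.single (J i) 1)|) ≤ ∫ ω, H J ω ∂π := by
    intro J
    refine Real.iSup_le (fun y => ?_) (integral_nonneg (hH0 J))
    rw [fam_iterated _ (Rint_hasFDerivAt π s α β hα hβ), zero_add]
    unfold Rint
    rw [← Real.norm_eq_abs]
    refine norm_integral_le_of_norm_le (hHi J) (.of_forall fun ω => ?_)
    rw [Real.norm_eq_abs, Finset.abs_prod]
    refine Finset.prod_le_prod (fun _ _ => abs_nonneg _) fun j _ => ?_
    refine hC l hl s hs _ _ (w j) (y.1 j) (hαβ ω j) ((norm_le_pi_norm y.1 j).trans y.2) _ ?_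
    rw [Finset.sum_apply]
    refine (Finset.sum_le_sum (g := fun _ => 1) fun i _ => ?_).trans (by simp)
    rw [Pi.single_apply]; split_ifs <;> simp
  calc _ ≤ ∑ J, ∫ ω, H J ω ∂π := Finset.sum_le_sum fun J _ => hJ J
    _ = ∫ ω, ∑ J, H J ω ∂π := (integral_finsetSum _ fun J _ => hHi J).symm
    _ ≤ ∫ ω, A ^ n * (Real.exp n * (n.factorial * Real.exp (n + 2))) ∂π :=
        integral_mono (integrable_finsetSum _ fun J _ => hHi J) (integrable_const _) hHs
    _ ≤ A ^ n * (Real.exp n * (n.factorial * Real.exp (n + 2))) := by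
        rw [integral_const, smul_eq_mul]
        refine mul_le_of_le_one_left (by positivity) ?_
        exact ENNReal.toReal_le_of_le_ofReal (by norm_num) (by simpa using hπ)
    _ = _ := by
        rw [hln]; simp only [A]; rw [div_pow, mul_pow]; ring


lemma gauss_Icc (A B : ℝ) (h : A ≤ B) : (gaussianReal 0 1).real (Set.Icc A B) = Psi 0 B - Psi 0 A := by
  have := nullSingletonClass_gaussianReal (μ := 0) (v := 1) one_ne_zero
  rw [measureReal_congr (Ioc_ae_eq_Icc (μ := gaussianReal 0 1)).symm]
  have hs : Set.Ioc A B = Set.Iic B \ Set.Iic A := by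
    ext x; simp [and_comm]
  rw [hs, measureReal_sdiff (Set.Iic_subset_Iic.2 h) measurableSet_Iic]
  simp only [Psi, cdf_eq_real]

lemma mrect_eq {d : ℕ} (hd : 0 < d) (a b : Fin d → ℝ) (φ : ℝ) (hφ : 0 < φ) (x : Fin d → ℝ) :
    mrect d a b φ x = volume.real {u : ℝ | (0 < u ∧ u < 1) ∧ ∀ j, a j - u / φ ≤ x j ∧ x j ≤ b j + u / φ} := by
  have : Nonempty (Fin d) := ⟨⟨0, hd⟩⟩
  unfold mrect
  set M := ⨆ j, max (x j - b j) (a j - x j) with hM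
  have hiff : ∀ u : ℝ, (∀ j, a j - u / φ ≤ x j ∧ x j ≤ b j + u / φ) ↔ φ * M ≤ u := by
    intro u
    rw [← le_div_iff₀' hφ, hM, ciSup_le_iff (Set.finite_range _).bddAbove]
    refine forall_congr' fun j => ?_
    rw [max_le_iff]
    constructor <;> rintro ⟨h1, h2⟩ <;> constructor <;> linarith
  simp only [hiff]
  unfold gphi
  split_ifs with h1 h2
  · have : {u : ℝ | (0 < u ∧ u < 1) ∧ φ * M ≤ u} = Set.Ioo 0 1 := by
      ext u
      simp only [Set.mem_setOf_eq, Set.mem_Ioo, and_iff_left_iff_imp]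
      rintro ⟨h, _⟩
      nlinarith
    rw [this]; simp
  · push Not at h1
    have hp : 0 < φ * M := by positivity
    have h3 : φ * M < 1 := by rw [lt_div_iff₀ hφ] at h2; linarith
    have : {u : ℝ | (0 < u ∧ u < 1) ∧ φ * M ≤ u} = Set.Ico (φ * M) 1 := by
      ext u
      simp only [Set.mem_setOf_eq, Set.mem_Ico]
      constructor
      · rintro ⟨⟨_, h⟩, h'⟩; exact ⟨h', h⟩
      · rintro ⟨h', h⟩; exact ⟨⟨by linarith, h⟩, h'⟩
    rw [this, Real.volume_real_Ico_of_le h3.le]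
  · have h3 : 1 ≤ φ * M := by push Not at h2; rw [div_le_iff₀ hφ] at h2; linarith
    have : {u : ℝ | (0 < u ∧ u < 1) ∧ φ * M ≤ u} = ∅ := by
      ext u
      simp only [Set.mem_setOf_eq, Set.mem_empty_iff_false, iff_false]
      rintro ⟨⟨_, h⟩, h'⟩; linarith
    rw [this]; simp

lemma mrect_measurable {d : ℕ} (a b : Fin d → ℝ) (φ : ℝ) : Measurable (mrect d a b φ) := by
  have h1 : Measurable (gphi φ) := by
    unfold gphi
    refine Measurable.ite measurableSet_Iic measurable_const ?_
    exact Measurable.ite measurableSet_Iio (by fun_prop) measurable_const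
  have h2 : Measurable fun w : Fin d → ℝ => ⨆ j, max (w j - b j) (a j - w j) :=
    Measurable.iSup fun j => by fun_prop
  exact h1.comp h2

lemma rho_repr {d : ℕ} (hd : 0 < d) (a b : Fin d → ℝ) (φ : ℝ) (hφ : 0 < φ) (ε σ : ℝ) (hε : 0 < ε) (hσ : 0 < σ)
    (γ γ' : Measure (Fin d → ℝ)) [IsProbabilityMeasure γ']
    (hγ : γ = ((Measure.pi (fun _ : Fin d => gaussianReal 0 1)).prod γ').map (fun p => σ • p.1 + p.2)) :
    ∃ (π : Measure (ℝ × (Fin d → ℝ))) (α β : ℝ × (Fin d → ℝ) → Fin d → ℝ), π Set.univ ≤ 1 ∧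
      Measurable α ∧ Measurable β ∧ (∀ ω j, α ω j ≤ β ω j) ∧ rhoFn d a b φ ε γ = Rint π (ε * σ) α β 0 := by
  set s := ε * σ with hs_def
  have hs : 0 < s := by positivity
  let U : Set ℝ := {u | (0 < u ∧ u < 1) ∧ ∀ j, a j - u / φ ≤ b j + u / φ}
  have hU : MeasurableSet U := by measurability
  have hU1 : volume U ≤ 1 := by
    calc volume U ≤ volume (Set.Ioo (0:ℝ) 1) := measure_mono fun u hu => hu.1
      _ = 1 := by simp
  have : IsFiniteMeasure (volume.restrict U) := ⟨by
    rw [Measure.restrict_apply_univ]; exact lt_of_le_of_lt hU1 ENNReal.one_lt_top⟩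
  let α : ℝ × (Fin d → ℝ) → Fin d → ℝ := fun p j => (a j - p.1 / φ - ε * p.2 j) / s
  let β : ℝ × (Fin d → ℝ) → Fin d → ℝ := fun p j => max (α p j) ((b j + p.1 / φ - ε * p.2 j) / s)
  have hα : Measurable α := by fun_prop
  have hβ : Measurable β := by fun_prop
  let π := (volume.restrict U).prod γ'
  refine ⟨π, α, β, ?_, hα, hβ, fun ω j => le_max_left _ _, ?_⟩
  · simp only [π]
    rw [← Set.univ_prod_univ, Measure.prod_prod]; simpa using hU1
  ext w
  unfold rhoFn
  set ν := Measure.pi (fun _ : Fin d => gaussianReal 0 1) with hν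
  have hm : Measurable fun z : Fin d → ℝ => mrect d a b φ (w + ε • z) :=
    (mrect_measurable a b φ).comp (by fun_prop)
  rw [hγ, integral_map (by fun_prop) hm.aestronglyMeasurable]
  let X : (Fin d → ℝ) × (Fin d → ℝ) → Fin d → ℝ := fun p => w + ε • (σ • p.1 + p.2)
  have hX : Measurable X := by fun_prop
  let Q : Set (((Fin d → ℝ) × (Fin d → ℝ)) × ℝ) := {q | ∀ j, a j - q.2 / φ ≤ X q.1 j ∧ X q.1 j ≤ b j + q.2 / φ}
  have hQ : MeasurableSet Q := by
    have : Q = ⋂ j, {q | a j - q.2 / φ ≤ X q.1 j} ∩ {q | X q.1 j ≤ b j + q.2 / φ} := by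
      ext q; simp [Q]
    rw [this]
    refine MeasurableSet.iInter fun j => ?_
    exact (measurableSet_le (by fun_prop) (by fun_prop)).inter (measurableSet_le (by fun_prop) (by fun_prop))
  let f : ((Fin d → ℝ) × (Fin d → ℝ)) → ℝ → ℝ := fun p u => Q.indicator (fun _ => (1:ℝ)) (p, u)
  have hfm : Measurable (Function.uncurry f) := (measurable_const.indicator hQ)
  have hf1 : ∀ p u, ‖f p u‖ ≤ 1 := by
    intro p u
    simp only [f, Set.indicator]; split_ifs <;> simp
  have e1 : ∀ p, mrect d a b φ (X p) = ∫ u in U, f p u := by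
    intro p
    rw [mrect_eq hd a b φ hφ]
    have : (fun u => f p u) = Set.indicator ((fun u => (p, u)) ⁻¹' Q) 1 := by
      ext u; simp [f, Set.indicator]
    rw [this, integral_indicator_one (hQ.preimage (by fun_prop)), measureReal_restrict_apply (hQ.preimage (by fun_prop))]
    congr 1
    ext u
    simp only [Set.mem_setOf_eq, Set.mem_inter_iff, Set.mem_preimage, Q, U]
    constructor
    · rintro ⟨h1, h2⟩; exact ⟨h2, h1, fun j => (h2 j).1.trans (h2 j).2⟩
    · rintro ⟨h2, h1, _⟩; exact ⟨h1, h2⟩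
  have e2 : ∀ u ∈ U, ∀ z, ∫ n, f (n, z) u ∂ν = ∏ j, ff s 0 (α (u, z) j) (β (u, z) j) (w j) := by
    intro u hu z
    have h1 : ∀ n : Fin d → ℝ, f (n, z) u = ∏ j, (Set.Icc (α (u, z) j - w j / s) (β (u, z) j - w j / s)).indicator (fun _ => (1:ℝ)) (n j) := by
      intro n
      have hj : ∀ j, (a j - u / φ ≤ X (n, z) j ∧ X (n, z) j ≤ b j + u / φ) ↔ n j ∈ Set.Icc (α (u, z) j - w j / s) (β (u, z) j - w j / s) := by
        intro j
        have hβ' : β (u, z) j = (b j + u / φ - ε * z j) / s := by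
          refine max_eq_right ?_
          simp only [α]
          have := hu.2 j
          gcongr
        have hXj : X (n, z) j = w j + s * n j + ε * z j := by
          simp [X, s]; ring
        rw [hβ', hXj, Set.mem_Icc]
        simp only [α]
        rw [← sub_div, ← sub_div, div_le_iff₀ hs, le_div_iff₀ hs]
        constructor <;> rintro ⟨h1, h2⟩ <;> constructor <;> linarith
      by_cases hq : ((n, z), u) ∈ Q
      · simp only [f]
        rw [Set.indicator_of_mem hq]
        symm
        refine Finset.prod_eq_one fun j _ => ?_
        rw [Set.indicator_of_mem ((hj j).1 (hq j))]
      · simp only [f]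
        rw [Set.indicator_of_notMem hq]
        have : ∃ j, ¬ (a j - u / φ ≤ X (n, z) j ∧ X (n, z) j ≤ b j + u / φ) := by
          by_contra hcon
          push Not at hcon
          exact hq hcon
        obtain ⟨j, hj'⟩ := this
        symm
        refine Finset.prod_eq_zero (Finset.mem_univ j) ?_
        rw [Set.indicator_of_notMem]
        rwa [← hj]
    simp only [h1]
    rw [hν, integral_fintype_prod_eq_prod (f := fun j x => (Set.Icc (α (u, z) j - w j / s) (β (u, z) j - w j / s)).indicator (fun _ => (1:ℝ)) x)]
    refine Finset.prod_congr rfl fun j _ => ?_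
    have := integral_indicator_one (μ := gaussianReal 0 1) (measurableSet_Icc (a := α (u, z) j - w j / s) (b := β (u, z) j - w j / s))
    rw [gauss_Icc _ _ (sub_le_sub_right (le_max_left _ _) _)] at this
    unfold ff
    rw [pow_zero, one_mul, ← this]
    rfl
  have hfi : Integrable (Function.uncurry f) ((ν.prod γ').prod (volume.restrict U)) :=
    Integrable.of_bound hfm.aestronglyMeasurable 1 (.of_forall fun q => hf1 _ _)
  calc ∫ p, mrect d a b φ (w + ε • (σ • p.1 + p.2)) ∂(ν.prod γ') = ∫ p, (∫ u in U, f p u) ∂(ν.prod γ') := by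
        congr 1; ext p; exact e1 p
    _ = ∫ u in U, ∫ p, f p u ∂(ν.prod γ') := integral_integral_swap hfi
    _ = ∫ u in U, ∫ z, ∏ j, ff s 0 (α (u, z) j) (β (u, z) j) (w j) ∂γ' := by
        refine setIntegral_congr_fun hU fun u hu => ?_
        have hi : Integrable (fun p => f p u) (ν.prod γ') :=
          Integrable.of_bound (hfm.comp (measurable_id.prodMk measurable_const)).aestronglyMeasurable 1 (.of_forall fun q => hf1 _ _)
        show ∫ p, f p u ∂(ν.prod γ') = _
        rw [integral_prod_symm _ hi]
        congr 1; ext z; exact e2 u hu z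
    _ = _ := by
        unfold Rint
        rw [integral_prod]
        · rfl
        · obtain ⟨C, h0, hC⟩ := prod_ff_bound s (0 : Fin d → ℕ)
          refine Integrable.of_bound (Measurable.aestronglyMeasurable ?_) C (.of_forall fun ω => hC _ _ _)
          refine Finset.measurable_prod _ fun j _ => ?_
          exact ff_measurable s _ (fun ω => α ω j) (fun ω => β ω j) (by fun_prop) (by fun_prop) (w j)


/-- for every v ≥ 1 and K > 0 there is a constant C = C(v,K) such that
for all d ≥ 3, Σ positive definite with unit diagonal and smallest eigenvalue σ_*²,
φ > 0, ε ∈ (0,1], rectangles A and all w,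
Σ_{j_1…j_v} sup_{‖y‖_∞ ≤ εσ_*η} |∂_{j_1…j_v} ρ^{A,φ,ε,Σ}(w+y)|
  ≤ C (log d)^{v/2}/(εσ_*)^v, where η = K/√(log d). -/
theorem stmt15 (v : ℕ) (hv : 1 ≤ v) (K : ℝ) (hK : 0 < K) :
    ∃ C : ℝ, ∀ d : ℕ, 3 ≤ d →
      ∀ (S : Fin d → Fin d → ℝ), (∀ j, S j j = 1) →
      ∀ σs : ℝ, 0 < σs →
      IsGLB {r : ℝ | ∃ x : Fin d → ℝ, (∑ j, (x j) ^ 2) = 1 ∧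
        r = ∑ j, ∑ k, x j * S j k * x k} (σs ^ 2) →
      ∀ γ : Measure (Fin d → ℝ), IsProbabilityMeasure γ →
      (∀ l : (Fin d → ℝ) →ₗ[ℝ] ℝ, ∃ vr : NNReal, γ.map l = gaussianReal 0 vr) →
      (∀ j k, ∫ z, z j * z k ∂γ = S j k) →
      ∀ φ : ℝ, 0 < φ → ∀ ε : ℝ, 0 < ε → ε ≤ 1 →
      ∀ a b : Fin d → ℝ, ∀ w : Fin d → ℝ,
        ∑ J : Fin v → Fin d,
          (⨆ y : {y : Fin d → ℝ // ‖y‖ ≤ ε * σs * (K / Real.sqrt (Real.log d))},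
            |iteratedFDeriv ℝ v (rhoFn d a b φ ε γ) (w + y.1)
              (fun i => Pi.single (J i) 1)|)
          ≤ C * Real.log d ^ ((v : ℝ) / 2) / (ε * σs) ^ v := by
  obtain ⟨C, hC0, hC⟩ := main_bound v K hK
  refine ⟨C, ?_⟩
  intro d hd S hS1 σs hσ hglb γ hγp hl hS φ hφ ε hε hε1 a b w
  obtain ⟨γ', hγ', hdec⟩ := gauss_decomp S γ hl hS σs hglb.1
  obtain ⟨π, α, β, hπ, hα, hβ, hαβ, hrep⟩ := rho_repr (by omega) a b φ hφ ε σs hε hσ γ γ' hdec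
  rw [hrep]
  exact hC hd π hπ (ε * σs) (by positivity) α β hα hβ hαβ w
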